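/- Let q be a prime power, n a positive integer, (σ,τ) ∈ Θ_{n,q}, and let H be the stabiliser in GL(n,q) of some fixed (ρ,I)-flag with (ρ,I) ∈ Σ_{n,q} of type (σ,τ). If Y ⊆ GL(n,q) is nonempty and (σ,τ)-transitive, then |Y| ≥ |GL(n,q)|/|H|, with equality if and only if Y is a (σ,τ)-clique; moreover, in the case of equality, Y is sharply transitive on (ρ,I)-flags. -/

import Mathlib

open Module

/-- The linear automorphism of `F_q^n` induced by `g ∈ GL(n,q)`. -/
def glMap (F : Type) [Field F] {n : ℕ} (g : GL (Fin n) F) : (Fin n → F) →ₗ[F] (Fin n → F) :=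
  Matrix.mulVecLin (g : Matrix (Fin n) (Fin n) F)

/-- An element `α = (ρ, I)` of `Σ_{n,q}`: a composition `ρ` of `n` together with a set `I` of
indices of parts of `ρ`, where for `q = 2` every part not indexed by `I` must exceed `1`. -/
structure SigmaNQ (q n : ℕ) where
  ρ : Composition n
  I : Finset (Fin ρ.length)
  two : q = 2 → ∀ i ∉ I, 1 < ρ.blocksFun i

/-- The first component `σ` of the type of `α = (ρ,I)`: the multiset of parts `ρ_i` with
`i ∈ I` (a partition, recorded as an unordered multiset of parts). -/
def SigmaNQ.typeSigma {q n : ℕ} (α : SigmaNQ q n) : Multiset ℕ :=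
  α.I.val.map α.ρ.blocksFun

/-- The second component `τ` of the type of `α = (ρ,I)`: the multiset of parts `ρ_i` with
`i ∉ I` (a partition, recorded as an unordered multiset of parts). -/
def SigmaNQ.typeTau {q n : ℕ} (α : SigmaNQ q n) : Multiset ℕ :=
  α.Iᶜ.val.map α.ρ.blocksFun

/-- An `α`-flag for `α = (ρ,I) ∈ Σ_{n,q}`: a `ρ`-flag `{0} = V_0 ≤ V_1 ≤ ⋯ ≤ V_k = F_q^n`
with `dim(V_i/V_{i−1}) = ρ_i`, together with, for each `i ∈ I`, an ordered basis of the
quotient `V_i/V_{i−1}`, recorded by a tuple of `ρ_i` representatives in `V_i` whose classes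
modulo `V_{i−1}` are linearly independent (hence a basis of `V_i/V_{i−1}`). -/
structure AlphaFlag (F : Type) [Field F] {q n : ℕ} (α : SigmaNQ q n) where
  V : Fin (α.ρ.length + 1) → Submodule F (Fin n → F)
  mono : Monotone V
  bot_eq : V 0 = ⊥
  top_eq : V (Fin.last α.ρ.length) = ⊤
  dim : ∀ i : Fin α.ρ.length,
    finrank F (V i.succ) = finrank F (V i.castSucc) + α.ρ.blocksFun i
  B : ∀ i : Fin α.ρ.length, i ∈ α.I → Fin (α.ρ.blocksFun i) → (Fin n → F)
  B_mem : ∀ i hi m, B i hi m ∈ V i.succ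
  B_indep : ∀ i hi,
    LinearIndependent F (fun m => (V i.castSucc).mkQ (B i hi m))

/-- `g ∈ GL(n,q)` maps the `α`-flag `A` to the `α`-flag `C`: it maps the subspaces of `A`
to those of `C`, and the basis representatives of `A` to representatives of the same classes
as those of `C` (i.e. `g` maps the induced bases of the quotients to each other). -/
def MapsAlphaFlag (F : Type) [Field F] {q n : ℕ} {α : SigmaNQ q n} (g : GL (Fin n) F)
    (A C : AlphaFlag F α) : Prop :=
  (∀ j, Submodule.map (glMap F g) (A.V j) = C.V j) ∧
  (∀ i hi m, glMap F g (A.B i hi m) - C.B i hi m ∈ C.V i.castSucc)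

/-- A subset `Y` of `GL(n,q)` is transitive on `α`-flags: there is a constant `r` such that
for all `α`-flags `A`, `C` there are exactly `r` elements `g ∈ Y` mapping `A` to `C`. -/
def TransitiveOnAlphaFlags (F : Type) [Field F] [Fintype F] {q n : ℕ} (Y : Set (GL (Fin n) F))
    (α : SigmaNQ q n) : Prop :=
  ∃ r : ℕ, ∀ A C : AlphaFlag F α,
    Nat.card {g : GL (Fin n) F // g ∈ Y ∧ MapsAlphaFlag F g A C} = r


/-- `(σ,τ) ∈ Θ_{n,q}`: `σ` and `τ` are partitions (multisets of positive parts) with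
`|σ| + |τ| = n` such that, if `q = 2`, every part of `τ` is greater than `1`. -/
def InTheta (q n : ℕ) (σ τ : Multiset ℕ) : Prop :=
  (∀ p ∈ σ, 0 < p) ∧ (∀ p ∈ τ, 0 < p) ∧ σ.sum + τ.sum = n ∧ (q = 2 → ∀ p ∈ τ, 1 < p)

/-- `Y ⊆ GL(n,q)` is `(σ,τ)`-transitive if it is transitive on `α`-flags for some
`α ∈ Σ_{n,q}` of type `(σ,τ)`. -/
def STTransitive (F : Type) [Field F] [Fintype F] (q n : ℕ) (Y : Set (GL (Fin n) F))
    (σ τ : Multiset ℕ) : Prop :=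
  ∃ α : SigmaNQ q n, α.typeSigma = σ ∧ α.typeTau = τ ∧ TransitiveOnAlphaFlags F Y α

/-- `Y ⊆ GL(n,q)` is a `(σ,τ)`-clique if for all distinct `x, y ∈ Y` the element `x⁻¹y`
fixes no `α`-flag with `α ∈ Σ_{n,q}` of type `(σ,τ)`. -/
def STClique (F : Type) [Field F] [Fintype F] (q n : ℕ) (Y : Set (GL (Fin n) F))
    (σ τ : Multiset ℕ) : Prop :=
  ∀ x ∈ Y, ∀ y ∈ Y, x ≠ y → ∀ α : SigmaNQ q n, α.typeSigma = σ → α.typeTau = τ →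
    ∀ A : AlphaFlag F α, ¬ MapsAlphaFlag F (x⁻¹ * y) A A

/-!
Identify flags that differ only in the representatives of their bases, so that `GL(n,q)` acts
transitively on the flags of each `α`. The heart of the matter is that the number of flags fixed
by `g` depends only on the type of `α`, and not on the order of its parts. Such flags are walks
from `0` to `F_q^n` in the set of subspaces, with the `i`-th step going from one `g`-invariant
subspace to a larger one (and `g` acting trivially on the quotient when it carries a basis), so
they are counted by a product of transfer matrices. These matrices commute: after passing to a
subquotient, one has to match the intermediate subspaces of two steps taken in either order, and
this is done by `N ↦ N^⊥` for a nondegenerate symmetric form making `g` self-adjoint. The form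
exists because the space is a direct sum of modules `F[X]/(h)`, on each of which
`(a, b) ↦ l(a * b)` works for a suitable linear functional `l`.

Consequently transitivity may be assumed for one `α` of the given type and the clique property
read off for another. If `Y` is transitive with constant `r` on a set `Ω` of flags, then
`|Y| = r * |Ω|`, while `|GL(n,q)| = |Ω| * |H|`; the clique property means that every point of `Ω`
is mapped to any given point by at most one element of `Y`, that is, `r = 1`.
-/

section BalancedForms

open Polynomial DirectSum

variable (R A N : Type*) [CommRing R] [CommRing A]
  [AddCommGroup N] [Module R N] [Module A N]

/-- The `A`-module `N` carries a nondegenerate symmetric `R`-bilinear form for which every element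
of `A` acts as a self-adjoint operator. -/
def HasBalancedForm : Prop :=
  ∃ B : LinearMap.BilinForm R N, B.IsSymm ∧ B.Nondegenerate ∧ ∀ a : A, B.IsSelfAdjoint (a • ·)

variable {R A N}

theorem nondegenerate_of_isSymm {B : LinearMap.BilinForm R N} (hsymm : B.IsSymm)
    (hsep : ∀ x, (∀ y, B x y = 0) → x = 0) : B.Nondegenerate :=
  hsymm.isRefl.nondegenerate_iff_separatingLeft.mpr hsep

theorem HasBalancedForm.of_equiv [Algebra R A] {P : Type*}
    [AddCommGroup P] [Module R P] [Module A P] [IsScalarTower R A N] [IsScalarTower R A P]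
    (h : HasBalancedForm R A N) (e : P ≃ₗ[A] N) :
    HasBalancedForm R A P := by
  obtain ⟨B, hsymm, hnd, hadj⟩ := h
  have hsymm' : (LinearMap.BilinForm.congr (e.symm.restrictScalars R) B).IsSymm :=
    ⟨fun x y => hsymm.eq (e x) (e y)⟩
  refine ⟨_, hsymm', nondegenerate_of_isSymm hsymm' fun x hx => ?_, fun a x y => ?_⟩
  · exact e.map_eq_zero_iff.mp (hnd.1 _ fun y => by simpa using hx (e.symm y))
  · simpa using hadj a (e x) (e y)

theorem HasBalancedForm.directSum {ι : Type*} [Finite ι] {M : ι → Type*}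
    [∀ i, AddCommGroup (M i)] [∀ i, Module R (M i)] [∀ i, Module A (M i)]
    (h : ∀ i, HasBalancedForm R A (M i)) : HasBalancedForm R A (⨁ i, M i) := by
  classical
  have := Fintype.ofFinite ι
  choose B hsymm hnd hadj using h
  let D : LinearMap.BilinForm R (⨁ i, M i) :=
    ∑ i, (B i).compl₁₂ (DirectSum.component R ι M i) (DirectSum.component R ι M i)
  have D_apply (x y : ⨁ i, M i) : D x y = ∑ i, B i (x i) (y i) := by
    simp [D, DirectSum.apply_eq_component R]
  have D_of (x : ⨁ i, M i) (i : ι) (m : M i) : D x (DirectSum.of M i m) = B i (x i) m := by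
    rw [D_apply, Finset.sum_eq_single_of_mem i (Finset.mem_univ i), DirectSum.of_eq_same]
    intro j _ hj
    rw [DirectSum.of_eq_of_ne _ _ _ hj, map_zero]
  have hD : D.IsSymm := ⟨fun x y => by
    simp only [D_apply]
    exact Finset.sum_congr rfl fun i _ => (hsymm i).eq _ _⟩
  refine ⟨D, hD, nondegenerate_of_isSymm hD fun x hx => ?_, fun a x y => ?_⟩
  · ext i
    exact (hnd i).1 _ fun m => (D_of x i m).symm.trans (hx _)
  · simp only [D_apply, DirectSum.smul_apply]
    exact Finset.sum_congr rfl fun i _ => hadj i a _ _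

theorem hasBalancedForm_of_functional {S : Type*} [CommRing S] [Algebra R S] [Algebra A S]
    (l : S →ₗ[R] R) (hl : ∀ x, (∀ y, l (x * y) = 0) → x = 0) : HasBalancedForm R A S := by
  let B : LinearMap.BilinForm R S := (LinearMap.mul R S).compr₂ l
  have hsymm : B.IsSymm := ⟨fun x y => by simp [B, mul_comm]⟩
  refine ⟨B, hsymm, nondegenerate_of_isSymm hsymm fun x hx => hl x hx, fun a x y => ?_⟩
  simp [B]

theorem repr_aeval_gen_of_natDegree_lt {S : Type*} [CommRing S] [Algebra R S] (pb : PowerBasis R S)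
    {p : R[X]} (hp : p.natDegree < pb.dim) (i : Fin pb.dim) :
    pb.basis.repr (aeval pb.gen p) i = p.coeff i := by
  have hsum : aeval pb.gen p = ∑ j : Fin pb.dim, p.coeff j • pb.basis j := by
    simp [aeval_eq_sum_range' hp, Finset.sum_range]
  rw [hsum, pb.basis.repr_sum_self]

/-- The functional is the coordinate at the highest power of the generator: multiplying `x ≠ 0` by
a suitable power of the generator moves its leading coefficient there. -/
theorem exists_functional_of_powerBasis {S : Type*} [CommRing S] [Algebra R S]
    (pb : PowerBasis R S) : ∃ l : S →ₗ[R] R, ∀ x, (∀ y, l (x * y) = 0) → x = 0 := by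
  cases subsingleton_or_nontrivial S
  · exact ⟨0, fun x _ => Subsingleton.elim x 0⟩
  have hdim := pb.dim_pos
  refine ⟨pb.basis.coord ⟨pb.dim - 1, by omega⟩, fun x hx => ?_⟩
  obtain ⟨p, hp, rfl⟩ := pb.exists_eq_aeval x
  set k := pb.dim - 1 - p.natDegree
  have hshift : (p * X ^ k).natDegree < pb.dim :=
    natDegree_mul_le.trans_lt (by grind [natDegree_X_pow_le])
  have hlead : p.coeff p.natDegree = 0 := by
    have htop : (p * X ^ k).coeff (pb.dim - 1) = 0 := by
      have := hx (pb.gen ^ k)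
      rwa [Basis.coord_apply, ← aeval_X_pow (R := R), ← map_mul,
        repr_aeval_gen_of_natDegree_lt pb hshift] at this
    rwa [show pb.dim - 1 = p.natDegree + k by omega, coeff_mul_X_pow] at htop
  rw [leadingCoeff_eq_zero.mp hlead, map_zero]

theorem hasBalancedForm_quotient_span_singleton {F : Type*} [Field F] {h : F[X]} (h0 : h ≠ 0) :
    HasBalancedForm F F[X] (F[X] ⧸ Ideal.span {h}) := by
  obtain ⟨l, hl⟩ := exists_functional_of_powerBasis (AdjoinRoot.powerBasis h0)
  exact hasBalancedForm_of_functional (S := F[X] ⧸ Ideal.span {h}) l hl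

/-- Equivalently, every square matrix over a field is conjugate to its transpose by a symmetric
matrix. -/
theorem exists_isSelfAdjoint_form {F V : Type*} [Field F] [AddCommGroup V] [Module F V]
    [FiniteDimensional F V] (f : End F V) :
    ∃ B : LinearMap.BilinForm F V, B.IsSymm ∧ B.Nondegenerate ∧ B.IsSelfAdjoint f := by
  obtain ⟨ι, _, p, hp, e, ⟨E⟩⟩ :=
    equiv_directSum_of_isTorsion (AEval.isTorsion_of_finiteDimensional F V f)
  have hsum := HasBalancedForm.directSum (R := F) (A := F[X]) fun i =>
    hasBalancedForm_quotient_span_singleton (pow_ne_zero (e i) (hp i).ne_zero)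
  obtain ⟨B, hsymm, hnd, hadj⟩ := hsum.of_equiv E
  let φ := AEval.of F V f
  have hsymm' : (LinearMap.BilinForm.congr φ.symm B).IsSymm :=
    ⟨fun x y => hsymm.eq (φ x) (φ y)⟩
  refine ⟨_, hsymm', nondegenerate_of_isSymm hsymm' fun x hx => ?_, fun x y => ?_⟩
  · exact φ.map_eq_zero_iff.mp (hnd.1 _ fun y => by simpa using hx (φ.symm y))
  · simpa [φ, AEval.X_smul_of] using hadj X (φ x) (φ y)

end BalancedForms

section FlagSteps

variable {F V V' : Type*} [Field F] [AddCommGroup V] [Module F V] [AddCommGroup V'] [Module F V']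

theorem finrank_comap_of_surjective [FiniteDimensional F V] {φ : V →ₗ[F] V'}
    (hφ : Function.Surjective φ) (W : Submodule F V') :
    finrank F (W.comap φ) = finrank F W + finrank F (LinearMap.ker φ) := by
  have hrank := LinearMap.finrank_range_add_finrank_ker (φ.domRestrict (W.comap φ))
  rw [LinearMap.range_domRestrict, Submodule.map_comap_eq_of_surjective hφ,
    LinearMap.ker_domRestrict] at hrank
  rw [← hrank, (Submodule.comapSubtypeEquivOfLe (LinearMap.ker_le_comap φ)).finrank_eq]

/-- One step of an `f`-invariant filtration: `W ≤ W'` are `f`-invariant, `W'/W` has dimension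
`p.1`, and `f` acts trivially on `W'/W` if the mark `p.2` is set. -/
structure FlagStep (f : End F V) (p : ℕ × Bool) (W W' : Submodule F V) : Prop where
  le : W ≤ W'
  invt_left : W ∈ f.invtSubmodule
  invt_right : W' ∈ f.invtSubmodule
  finrank_eq : finrank F W' = finrank F W + p.1
  sub_mem : p.2 = true → ∀ v ∈ W', f v - v ∈ W

theorem FlagStep.orthogonal [FiniteDimensional F V] {f : End F V} {p : ℕ × Bool}
    {W W' : Submodule F V} (h : FlagStep f p W W') {B : LinearMap.BilinForm F V}
    (hnd : B.Nondegenerate) (hf : B.IsSelfAdjoint f) :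
    FlagStep f p (B.orthogonal W') (B.orthogonal W) where
  le := B.orthogonal_le h.le
  invt_left x hx y hy := (hf y x).symm.trans (hx _ (h.invt_right hy))
  invt_right x hx y hy := (hf y x).symm.trans (hx _ (h.invt_left hy))
  finrank_eq := by
    have hW := Submodule.finrank_le W
    have hW' := Submodule.finrank_le W'
    have := h.finrank_eq
    rw [LinearMap.BilinForm.finrank_orthogonal hnd, LinearMap.BilinForm.finrank_orthogonal hnd]
    omega
  sub_mem hp x hx y hy := by
    have : B (f y - y) x = 0 := hx _ (h.sub_mem hp y hy)
    rwa [map_sub, LinearMap.sub_apply, hf y x, ← map_sub] at this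

theorem flagStep_map_iff {φ : V →ₗ[F] V'} (hφ : Function.Injective φ) {f : End F V}
    {f' : End F V'} (hf : ∀ v, φ (f v) = f' (φ v)) {p : ℕ × Bool} {W W' : Submodule F V} :
    FlagStep f' p (W.map φ) (W'.map φ) ↔ FlagStep f p W W' := by
  have hinvt (U : Submodule F V) : U.map φ ∈ f'.invtSubmodule ↔ U ∈ f.invtSubmodule := by
    simp [End.mem_invtSubmodule_iff_forall_mem_of_mem, ← hf, hφ.eq_iff]
  have hrank (U : Submodule F V) : finrank F (U.map φ) = finrank F U :=
    (Submodule.equivMapOfInjective φ hφ U).finrank_eq.symm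
  have hsub : (∀ v ∈ W'.map φ, f' v - v ∈ W.map φ) ↔ ∀ v ∈ W', f v - v ∈ W := by
    simp [← hf, ← map_sub, hφ.eq_iff]
  refine ⟨fun ⟨hle, hW, hW', hd, ht⟩ => ⟨?_, (hinvt W).mp hW, (hinvt W').mp hW', ?_, ?_⟩,
    fun ⟨hle, hW, hW', hd, ht⟩ => ⟨?_, (hinvt W).mpr hW, (hinvt W').mpr hW', ?_, ?_⟩⟩
  · exact (Submodule.map_le_map_iff_of_injective hφ _ _).mp hle
  · simpa only [hrank] using hd
  · exact fun hp => hsub.mp (ht hp)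
  · exact Submodule.map_mono hle
  · simpa only [hrank] using hd
  · exact fun hp => hsub.mpr (ht hp)

theorem flagStep_comap_iff [FiniteDimensional F V] {φ : V →ₗ[F] V'}
    (hφ : Function.Surjective φ) {f : End F V} {f' : End F V'} (hf : ∀ v, φ (f v) = f' (φ v))
    {p : ℕ × Bool} {W W' : Submodule F V'} :
    FlagStep f p (W.comap φ) (W'.comap φ) ↔ FlagStep f' p W W' := by
  have hinvt (U : Submodule F V') : U.comap φ ∈ f.invtSubmodule ↔ U ∈ f'.invtSubmodule := by
    simp [End.mem_invtSubmodule_iff_forall_mem_of_mem, hf, hφ.forall]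
  have hsub : (∀ v ∈ W'.comap φ, f v - v ∈ W.comap φ) ↔ ∀ v ∈ W', f' v - v ∈ W := by
    simp [hf, hφ.forall]
  have hrank := finrank_comap_of_surjective hφ
  refine ⟨fun ⟨hle, hW, hW', hd, ht⟩ => ⟨?_, (hinvt W).mp hW, (hinvt W').mp hW', ?_, ?_⟩,
    fun ⟨hle, hW, hW', hd, ht⟩ => ⟨?_, (hinvt W).mpr hW, (hinvt W').mpr hW', ?_, ?_⟩⟩
  · exact (Submodule.comap_le_comap_iff_of_surjective hφ).mp hle
  · rw [hrank, hrank] at hd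
    omega
  · exact fun hp => hsub.mp (ht hp)
  · exact Submodule.comap_mono hle
  · rw [hrank, hrank]
    omega
  · exact fun hp => hsub.mpr (ht hp)

/-- The subspaces that refine `W ≤ W'` into a step marked `p` followed by a step marked `q`. -/
def refinements (f : End F V) (p q : ℕ × Bool) (W W' : Submodule F V) : Set (Submodule F V) :=
  {N | FlagStep f p W N ∧ FlagStep f q N W'}

theorem refinements_map {φ : V →ₗ[F] V'} (hφ : Function.Injective φ) {f : End F V}
    {f' : End F V'} (hf : ∀ v, φ (f v) = f' (φ v)) (p q : ℕ × Bool) (W W' : Submodule F V) :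
    refinements f' p q (W.map φ) (W'.map φ) = Submodule.map φ '' refinements f p q W W' := by
  refine Set.Subset.antisymm (fun N hN => ?_) ?_
  · have hNφ : (N.comap φ).map φ = N :=
      Submodule.map_comap_eq_self (hN.2.le.trans LinearMap.map_le_range)
    rw [← hNφ] at hN
    exact ⟨_, ⟨(flagStep_map_iff hφ hf).mp hN.1, (flagStep_map_iff hφ hf).mp hN.2⟩, hNφ⟩
  · rintro _ ⟨N, hN, rfl⟩
    exact ⟨(flagStep_map_iff hφ hf).mpr hN.1, (flagStep_map_iff hφ hf).mpr hN.2⟩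

theorem refinements_comap [FiniteDimensional F V] {φ : V →ₗ[F] V'}
    (hφ : Function.Surjective φ) {f : End F V} {f' : End F V'} (hf : ∀ v, φ (f v) = f' (φ v))
    (p q : ℕ × Bool) (W W' : Submodule F V') :
    refinements f p q (W.comap φ) (W'.comap φ) = Submodule.comap φ '' refinements f' p q W W' := by
  refine Set.Subset.antisymm (fun N hN => ?_) ?_
  · have hNφ : (N.map φ).comap φ = N :=
      Submodule.comap_map_eq_self ((LinearMap.ker_le_comap φ).trans hN.1.le)
    rw [← hNφ] at hN
    exact ⟨_, ⟨(flagStep_comap_iff hφ hf).mp hN.1, (flagStep_comap_iff hφ hf).mp hN.2⟩, hNφ⟩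
  · rintro _ ⟨N, hN, rfl⟩
    exact ⟨(flagStep_comap_iff hφ hf).mpr hN.1, (flagStep_comap_iff hφ hf).mpr hN.2⟩

theorem ncard_refinements_bot_top_comm [FiniteDimensional F V] (f : End F V) (p q : ℕ × Bool) :
    (refinements f p q ⊥ ⊤).ncard = (refinements f q p ⊥ ⊤).ncard := by
  obtain ⟨B, hsymm, hnd, hf⟩ := exists_isSelfAdjoint_form f
  have horth : Function.Involutive B.orthogonal :=
    LinearMap.BilinForm.orthogonal_orthogonal hnd hsymm.isRefl
  have hmaps (p q : ℕ × Bool) :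
      Set.MapsTo B.orthogonal (refinements f p q ⊥ ⊤) (refinements f q p ⊥ ⊤) := fun N hN => by
    constructor
    · simpa only [B.orthogonal_top_eq_bot hnd] using hN.2.orthogonal hnd hf
    · simpa only [B.orthogonal_bot] using hN.1.orthogonal hnd hf
  rw [← Set.ncard_image_of_injective _ horth.injective]
  congr 1
  exact (hmaps p q).image_subset.antisymm fun N hN => ⟨_, hmaps q p hN, horth N⟩

theorem ncard_refinements_comm [FiniteDimensional F V] (f : End F V) (p q : ℕ × Bool)
    (W W' : Submodule F V) : (refinements f p q W W').ncard = (refinements f q p W W').ncard := by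
  by_cases h : W ≤ W' ∧ W ∈ f.invtSubmodule ∧ W' ∈ f.invtSubmodule
  · obtain ⟨hle, hW, hW'⟩ := h
    let K := W.comap W'.subtype
    let φ : W' →ₗ[F] W' ⧸ K := K.mkQ
    let f' : End F W' := f.restrict hW'
    let g : End F (W' ⧸ K) := K.mapQ K f' fun x hx => hW hx
    have himage (p q : ℕ × Bool) : refinements f p q W W' =
        Submodule.map W'.subtype '' (Submodule.comap φ '' refinements g p q ⊥ ⊤) := by
      rw [← refinements_comap (f := f') K.mkQ_surjective fun _ => rfl,
        ← refinements_map (f' := f) W'.subtype_injective fun _ => rfl,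
        Submodule.comap_top, Submodule.map_subtype_top, Submodule.comap_bot,
        Submodule.ker_mkQ, Submodule.map_comap_subtype, inf_eq_right.mpr hle]
    have hcard (p q : ℕ × Bool) :
        (refinements f p q W W').ncard = (refinements g p q ⊥ ⊤).ncard := by
      rw [himage, Set.ncard_image_of_injective _ (Submodule.map_injective_of_injective
        W'.subtype_injective), Set.ncard_image_of_injective _
        (Submodule.comap_injective_of_surjective K.mkQ_surjective)]
    rw [hcard, hcard, ncard_refinements_bot_top_comm]
  · have hempty (p q : ℕ × Bool) : refinements f p q W W' = ∅ :=
      Set.eq_empty_of_forall_notMem fun N hN =>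
        h ⟨hN.1.le.trans hN.2.le, hN.1.invt_left, hN.2.invt_right⟩
    rw [hempty, hempty]

end FlagSteps

section Walks

variable {S : Type*}

/-- The walks `x = V 0, …, V k = y` whose `i`-th step is an instance of the relation `R i`. -/
def Walk {k : ℕ} (R : Fin k → S → S → Prop) (x y : S) : Type _ :=
  {V : Fin (k + 1) → S // V 0 = x ∧ V (Fin.last k) = y ∧ ∀ i, R i (V i.castSucc) (V i.succ)}

instance Walk.finite [Finite S] {k : ℕ} (R : Fin k → S → S → Prop) (x y : S) :
    Finite (Walk R x y) :=
  inferInstanceAs (Finite {_V : Fin (k + 1) → S // _})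

/-- A walk is its first step followed by the remaining walk. -/
def Walk.consEquiv {k : ℕ} (R : Fin (k + 1) → S → S → Prop) (x y : S) :
    Walk R x y ≃ Σ z : {z // R 0 x z}, Walk (Fin.tail R) z.1 y where
  toFun V := ⟨⟨V.1 1, by simpa [V.2.1] using V.2.2.2 0⟩,
    ⟨Fin.tail V.1, rfl, V.2.2.1, fun i => V.2.2.2 i.succ⟩⟩
  invFun U := ⟨Fin.cons x U.2.1, rfl, U.2.2.2.1,
    Fin.cases (U.2.2.1.symm ▸ U.1.2 : R 0 x (U.2.1 0)) U.2.2.2.2⟩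
  left_inv V := Subtype.ext (by simp [← V.2.1])
  right_inv := by
    rintro ⟨⟨z, hz⟩, ⟨U, hU₀, hU⟩⟩
    obtain rfl : U 0 = z := hU₀
    rfl

open Classical in
/-- The adjacency matrix of a relation; products of such matrices count walks. -/
noncomputable def relMatrix (R : S → S → Prop) : Matrix S S ℕ :=
  Matrix.of fun x y => if R x y then 1 else 0

theorem relMatrix_mul_relMatrix_apply [Fintype S] (R R' : S → S → Prop) (x y : S) :
    (relMatrix R * relMatrix R') x y = {z | R x z ∧ R' z y}.ncard := by
  classical
  rw [Set.ncard_eq_toFinset_card', Set.toFinset_ofPred, Finset.card_filter]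
  simp [relMatrix, Matrix.mul_apply, ← ite_and, -Finset.sum_boole, and_comm]

theorem prod_relMatrix_apply [Fintype S] [DecidableEq S] {k : ℕ} (R : Fin k → S → S → Prop)
    (x y : S) : (List.ofFn fun i => relMatrix (R i)).prod x y = Nat.card (Walk R x y) := by
  classical
  induction k generalizing x with
  | zero =>
    rw [List.ofFn_zero, List.prod_nil, Matrix.one_apply]
    split_ifs with hxy
    · refine (Nat.card_eq_one_iff_exists.mpr ⟨⟨fun _ => x, rfl, hxy, nofun⟩, fun V => ?_⟩).symm
      exact Subtype.ext (funext fun i => by rw [Fin.eq_zero i, V.2.1])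
    · have : IsEmpty (Walk R x y) := ⟨fun V => hxy (V.2.1.symm.trans V.2.2.1)⟩
      exact Nat.card_of_isEmpty.symm
  | succ k ih =>
    have hcard : Nat.card (Walk R x y) =
        ∑ z : {z // R 0 x z}, Nat.card (Walk (Fin.tail R) z.1 y) := by
      rw [Nat.card_congr (Walk.consEquiv R x y), Nat.card_sigma]
    rw [hcard, List.ofFn_succ, List.prod_cons, Matrix.mul_apply]
    simp only [relMatrix, Matrix.of_apply, ite_mul, one_mul, zero_mul, ← Finset.sum_filter]
    rw [Finset.sum_subtype (p := R 0 x) _ (by simp)]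
    exact Finset.sum_congr rfl fun z _ => ih (Fin.tail R) z

theorem card_walk_eq_of_perm [Finite S] {ι : Type*} {R : ι → S → S → Prop}
    (hcomm : ∀ i j x y, {z | R i x z ∧ R j z y}.ncard = {z | R j x z ∧ R i z y}.ncard)
    {k k' : ℕ} {p : Fin k → ι} {p' : Fin k' → ι} (hp : (List.ofFn p).Perm (List.ofFn p'))
    (x y : S) :
    Nat.card (Walk (fun i => R (p i)) x y) = Nat.card (Walk (fun i => R (p' i)) x y) := by
  classical
  have := Fintype.ofFinite S
  have hprod : (List.ofFn fun i => relMatrix (R (p i))).prod =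
      (List.ofFn fun i => relMatrix (R (p' i))).prod := by
    have hmap := hp.map fun i => relMatrix (R i)
    rw [List.map_ofFn, List.map_ofFn] at hmap
    refine hmap.prod_eq' (List.pairwise_ofFn.mpr fun i j _ => Matrix.ext fun x y => ?_)
    simp only [Function.comp_apply, relMatrix_mul_relMatrix_apply, hcomm]
  rw [← prod_relMatrix_apply, ← prod_relMatrix_apply, hprod]

end Walks

section QuotientFrames

variable {F V : Type*} [Field F] [AddCommGroup V] [Module F V] {W W' : Submodule F V} {d : ℕ}

theorem finrank_map_mkQ [FiniteDimensional F V] (h : W ≤ W')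
    (hd : finrank F W' = finrank F W + d) : finrank F (W'.map W.mkQ) = d := by
  have hrank := finrank_comap_of_surjective W.mkQ_surjective (W'.map W.mkQ)
  rw [Submodule.comap_map_mkQ, sup_eq_right.mpr h, Submodule.ker_mkQ] at hrank
  omega

theorem le_sup_span_range [FiniteDimensional F V] (h : W ≤ W')
    (hd : finrank F W' = finrank F W + d) {c : Fin d → V} (hc : ∀ m, c m ∈ W')
    (hind : LinearIndependent F fun m => W.mkQ (c m)) :
    W' ≤ W ⊔ Submodule.span F (Set.range c) := by
  have hle : (Submodule.span F (Set.range c)).map W.mkQ ≤ W'.map W.mkQ :=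
    Submodule.map_mono (Submodule.span_le.mpr (Set.range_subset_iff.mpr hc))
  have heq : (Submodule.span F (Set.range c)).map W.mkQ = W'.map W.mkQ := by
    refine Submodule.eq_of_le_of_finrank_eq hle ?_
    rw [finrank_map_mkQ h hd, Submodule.map_span, ← Set.range_comp]
    exact (finrank_span_eq_card hind).trans (Fintype.card_fin d)
  rw [← Submodule.comap_map_mkQ, heq]
  exact Submodule.le_comap_map _ _

variable (W W' d) in
/-- Linearly independent `d`-tuples in `W'/W`, realised as the image of `W'` in `V ⧸ W`. When
`W'/W` has dimension `d`, these are its ordered bases. -/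
def Frame : Type _ :=
  {s : Fin d → W'.map W.mkQ // LinearIndependent F s}

/-- The frame of the classes modulo `W` of a tuple of vectors. -/
def Frame.ofVectors (c : Fin d → V) (hc : ∀ m, c m ∈ W')
    (hind : LinearIndependent F fun m => W.mkQ (c m)) : Frame W W' d :=
  ⟨fun m => ⟨W.mkQ (c m), Submodule.mem_map_of_mem (hc m)⟩,
    LinearIndependent.of_comp (W'.map W.mkQ).subtype hind⟩

/-- A choice of representatives in `V` for the vectors of a frame. -/
noncomputable def Frame.lift (s : Frame W W' d) (m : Fin d) : V :=
  (Submodule.mem_map.mp (s.1 m).2).choose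

theorem Frame.lift_mem (s : Frame W W' d) (m : Fin d) : s.lift m ∈ W' :=
  (Submodule.mem_map.mp (s.1 m).2).choose_spec.1

theorem Frame.mkQ_lift (s : Frame W W' d) (m : Fin d) : W.mkQ (s.lift m) = s.1 m :=
  (Submodule.mem_map.mp (s.1 m).2).choose_spec.2

theorem Frame.linearIndependent_mkQ_lift (s : Frame W W' d) :
    LinearIndependent F fun m => W.mkQ (s.lift m) := by
  simp only [s.mkQ_lift]
  exact s.2.map' (W'.map W.mkQ).subtype (Submodule.ker_subtype _)

instance Frame.finite [Finite V] : Finite (Frame W W' d) :=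
  have : Finite (V ⧸ W) := Finite.of_surjective _ W.mkQ_surjective
  inferInstanceAs (Finite {_s : Fin d → W'.map W.mkQ // _})

theorem Frame.nonempty [FiniteDimensional F V] (h : W ≤ W')
    (hd : finrank F W' = finrank F W + d) : Nonempty (Frame W W' d) :=
  ⟨⟨_, (finBasisOfFinrankEq F (W'.map W.mkQ) (finrank_map_mkQ h hd)).linearIndependent⟩⟩

theorem Frame.card [Fintype F] [Finite V] (h : W ≤ W') (hd : finrank F W' = finrank F W + d) :
    Nat.card (Frame W W' d) = ∏ i : Fin d, (Fintype.card F ^ d - Fintype.card F ^ (i : ℕ)) := by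
  have hrank := finrank_map_mkQ h hd
  have : Finite (V ⧸ W) := Finite.of_surjective _ W.mkQ_surjective
  rw [Frame, card_linearIndependent hrank.ge, hrank]

end QuotientFrames

section LinearAutomorphisms

variable {F : Type} [Field F] {n : ℕ}

theorem glMap_one : glMap F (1 : GL (Fin n) F) = LinearMap.id :=
  Matrix.mulVecLin_one

theorem glMap_mul (g h : GL (Fin n) F) : glMap F (g * h) = glMap F g ∘ₗ glMap F h :=
  Matrix.mulVecLin_mul _ _

theorem glMap_injective (g : GL (Fin n) F) : Function.Injective (glMap F g) :=
  Matrix.mulVec_injective_of_isUnit g.isUnit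

theorem finrank_map_glMap (g : GL (Fin n) F) (W : Submodule F (Fin n → F)) :
    finrank F (W.map (glMap F g)) = finrank F W :=
  (Submodule.equivMapOfInjective _ (glMap_injective g) W).finrank_eq.symm

theorem map_glMap_eq_self_iff {g : GL (Fin n) F} {W : Submodule F (Fin n → F)} :
    W.map (glMap F g) = W ↔ W ∈ End.invtSubmodule (glMap F g) := by
  rw [End.mem_invtSubmodule_iff_map_le]
  exact ⟨le_of_eq, fun h => Submodule.eq_of_le_of_finrank_eq h (finrank_map_glMap g W)⟩

theorem exists_glMap_eq (e : (Fin n → F) ≃ₗ[F] (Fin n → F)) :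
    ∃ g : GL (Fin n) F, glMap F g = e := by
  obtain ⟨g, hg⟩ := Matrix.GeneralLinearGroup.toLin.surjective (.ofLinearEquiv e)
  exact ⟨g, congrArg Units.val hg⟩

end LinearAutomorphisms

section FlagClasses

variable {F : Type} [Field F] {q n : ℕ} {α : SigmaNQ q n}

theorem MapsAlphaFlag.one (A : AlphaFlag F α) : MapsAlphaFlag F 1 A A := by
  refine ⟨fun j => ?_, fun i hi m => ?_⟩ <;> simp [glMap_one]

theorem MapsAlphaFlag.mul {g h : GL (Fin n) F} {A C D : AlphaFlag F α}
    (hg : MapsAlphaFlag F g A C) (hh : MapsAlphaFlag F h C D) : MapsAlphaFlag F (h * g) A D := by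
  refine ⟨fun j => ?_, fun i hi m => ?_⟩
  · rw [glMap_mul, Submodule.map_comp, hg.1, hh.1]
  · have hmem : glMap F h (glMap F g (A.B i hi m) - C.B i hi m) ∈ D.V i.castSucc := by
      rw [← hh.1]
      exact Submodule.mem_map_of_mem (hg.2 i hi m)
    have := Submodule.add_mem _ hmem (hh.2 i hi m)
    rwa [map_sub, sub_add_sub_cancel, ← LinearMap.comp_apply, ← glMap_mul] at this

theorem MapsAlphaFlag.inv {g : GL (Fin n) F} {A C : AlphaFlag F α} (hg : MapsAlphaFlag F g A C) :
    MapsAlphaFlag F g⁻¹ C A := by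
  have hid : glMap F g⁻¹ ∘ₗ glMap F g = LinearMap.id := by
    rw [← glMap_mul, inv_mul_cancel, glMap_one]
  have hV (j) : (C.V j).map (glMap F g⁻¹) = A.V j := by
    rw [← hg.1, ← Submodule.map_comp, hid, Submodule.map_id]
  refine ⟨hV, fun i hi m => ?_⟩
  have hmem : glMap F g⁻¹ (glMap F g (A.B i hi m) - C.B i hi m) ∈ A.V i.castSucc := by
    rw [← hV]
    exact Submodule.mem_map_of_mem (hg.2 i hi m)
  rwa [map_sub, ← LinearMap.comp_apply, hid, LinearMap.id_apply, ← Submodule.neg_mem_iff,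
    neg_sub] at hmem

/-- The image of an `α`-flag under `g`, with the image representatives. -/
def AlphaFlag.image (g : GL (Fin n) F) (A : AlphaFlag F α) : AlphaFlag F α where
  V j := (A.V j).map (glMap F g)
  mono _ _ h := Submodule.map_mono (A.mono h)
  bot_eq := by rw [A.bot_eq, Submodule.map_bot]
  top_eq := by rw [A.top_eq, map_glMap_eq_self_iff]; exact End.invtSubmodule.top_mem _
  dim i := by rw [finrank_map_glMap, finrank_map_glMap, A.dim]
  B i hi m := glMap F g (A.B i hi m)
  B_mem i hi m := Submodule.mem_map_of_mem (A.B_mem i hi m)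
  B_indep i hi := (A.B_indep i hi).map' ((A.V i.castSucc).mapQ _ _ (Submodule.le_comap_map _ _))
    (by rw [Submodule.ker_mapQ, Submodule.comap_map_eq_of_injective (glMap_injective g),
      Submodule.mkQ_map_self])

theorem AlphaFlag.mapsAlphaFlag_image (g : GL (Fin n) F) (A : AlphaFlag F α) :
    MapsAlphaFlag F g A (A.image g) :=
  ⟨fun _ => rfl, fun i hi m => by simp [AlphaFlag.image]⟩

theorem MapsAlphaFlag.unique {g : GL (Fin n) F} {A C D : AlphaFlag F α}
    (hC : MapsAlphaFlag F g A C) (hD : MapsAlphaFlag F g A D) : MapsAlphaFlag F 1 C D := by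
  simpa only [mul_inv_cancel] using hC.inv.mul hD

/-- Two `α`-flags are identified when they have the same subspaces and their representatives
define the same bases of the quotients. -/
instance AlphaFlag.setoid : Setoid (AlphaFlag F α) where
  r := MapsAlphaFlag F 1
  iseqv := ⟨.one, fun h => h.unique (.one _), fun h h' => h.inv.unique h'⟩

variable (F α) in
/-- The `(ρ, I)`-flags of the paper: `AlphaFlag`s up to the choice of representatives of the basis
vectors of the quotients. -/
def FlagClass : Type := Quotient (AlphaFlag.setoid (F := F) (α := α))

/-- The class of an `α`-flag. -/
def FlagClass.mk (A : AlphaFlag F α) : FlagClass F α := Quotient.mk _ A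

theorem FlagClass.mk_surjective : Function.Surjective (FlagClass.mk (F := F) (α := α)) :=
  Quotient.mk_surjective

theorem FlagClass.mk_eq_mk_iff {A C : AlphaFlag F α} :
    FlagClass.mk A = FlagClass.mk C ↔ MapsAlphaFlag F 1 A C :=
  Quotient.eq

instance FlagClass.mulAction : MulAction (GL (Fin n) F) (FlagClass F α) where
  smul g := Quotient.map (AlphaFlag.image g) fun A C (h : MapsAlphaFlag F 1 A C) =>
    (A.mapsAlphaFlag_image g).unique <| by simpa using h.mul (C.mapsAlphaFlag_image g)
  one_smul := Quotient.ind fun A => Quotient.sound ((A.mapsAlphaFlag_image 1).unique (.one A))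
  mul_smul g h := Quotient.ind fun A => Quotient.sound <| (A.mapsAlphaFlag_image (g * h)).unique <|
    (A.mapsAlphaFlag_image h).mul ((A.image h).mapsAlphaFlag_image g)

theorem FlagClass.smul_mk_eq_mk_iff {g : GL (Fin n) F} {A C : AlphaFlag F α} :
    g • FlagClass.mk A = FlagClass.mk C ↔ MapsAlphaFlag F g A C := by
  have himage := A.mapsAlphaFlag_image g
  change FlagClass.mk (A.image g) = _ ↔ _
  rw [FlagClass.mk_eq_mk_iff]
  exact ⟨fun h => by simpa using himage.mul h, himage.unique⟩

theorem AlphaFlag.exists_adapted_basis (A : AlphaFlag F α) :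
    ∃ b : Basis (Σ i : Fin α.ρ.length, Fin (α.ρ.blocksFun i)) F (Fin n → F),
      (∀ j, A.V j = Submodule.span F (b '' {x | x.1.castSucc < j})) ∧
      ∀ i hi m, b ⟨i, m⟩ = A.B i hi m := by
  classical
  have hstep (i) : ∃ c : Fin (α.ρ.blocksFun i) → (Fin n → F), (∀ m, c m ∈ A.V i.succ) ∧
      LinearIndependent F (fun m => (A.V i.castSucc).mkQ (c m)) ∧ ∀ hi, c = A.B i hi := by
    by_cases hi : i ∈ α.I
    · exact ⟨A.B i hi, A.B_mem i hi, A.B_indep i hi, fun _ => rfl⟩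
    · obtain ⟨s⟩ := Frame.nonempty (A.mono i.castSucc_le_succ) (A.dim i)
      exact ⟨s.lift, s.lift_mem, s.linearIndependent_mkQ_lift, fun h => absurd h hi⟩
  choose c hc hind hcB using hstep
  let v : (Σ i : Fin α.ρ.length, Fin (α.ρ.blocksFun i)) → (Fin n → F) := fun x => c x.1 x.2
  have hV (j) : A.V j = Submodule.span F (v '' {x | x.1.castSucc < j}) := by
    refine le_antisymm ?_ (Submodule.span_le.mpr ?_)
    · induction j using Fin.induction with
      | zero => simp [A.bot_eq]
      | succ i ih =>
        refine (le_sup_span_range (A.mono i.castSucc_le_succ) (A.dim i) (hc i) (hind i)).trans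
          (sup_le (ih.trans (Submodule.span_mono (Set.image_mono fun x hx => ?_)))
            (Submodule.span_mono (Set.range_subset_iff.mpr fun m => ?_)))
        · exact lt_trans hx i.castSucc_lt_succ
        · exact ⟨⟨i, m⟩, i.castSucc_lt_succ, rfl⟩
    · rintro _ ⟨x, hx, rfl⟩
      exact A.mono (Fin.castSucc_lt_iff_succ_le.mp hx) (hc x.1 x.2)
  have htop : ⊤ ≤ Submodule.span F (Set.range v) := by
    rw [← A.top_eq, hV]
    exact Submodule.span_mono (Set.image_subset_range _ _)
  refine ⟨basisOfTopLeSpanOfCardEqFinrank v htop (by simp [α.ρ.sum_blocksFun]), ?_, ?_⟩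
  · simpa using hV
  · intro i hi m
    simp [v, hcB i hi]

theorem AlphaFlag.exists_mapsAlphaFlag (A C : AlphaFlag F α) :
    ∃ g : GL (Fin n) F, MapsAlphaFlag F g A C := by
  obtain ⟨b, hV, hB⟩ := A.exists_adapted_basis
  obtain ⟨b', hV', hB'⟩ := C.exists_adapted_basis
  let e := b.equiv b' (Equiv.refl _)
  have he (x) : e (b x) = b' x := b.equiv_apply x b' _
  obtain ⟨g, hg⟩ := exists_glMap_eq e
  refine ⟨g, fun j => ?_, fun i hi m => ?_⟩
  · rw [hg, hV, hV', Submodule.map_span, Set.image_image]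
    simp only [LinearEquiv.coe_coe, he]
  · rw [hg, ← hB, ← hB', LinearEquiv.coe_coe, he, sub_self]
    exact Submodule.zero_mem _

instance FlagClass.isPretransitive : MulAction.IsPretransitive (GL (Fin n) F) (FlagClass F α) where
  exists_smul_eq := FlagClass.mk_surjective.forall₂.mpr fun A C => by
    simpa only [FlagClass.smul_mk_eq_mk_iff] using A.exists_mapsAlphaFlag C

instance FlagClass.finite [Finite F] : Finite (FlagClass F α) := by
  cases isEmpty_or_nonempty (FlagClass F α)
  · infer_instance
  · obtain ⟨x⟩ := ‹Nonempty (FlagClass F α)›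
    exact Finite.of_surjective _ (MulAction.surjective_smul (GL (Fin n) F) x)

/-- The `i`-th part of `α`, marked with whether its quotient carries a basis. -/
def SigmaNQ.markedPart (α : SigmaNQ q n) (i : Fin α.ρ.length) : ℕ × Bool :=
  (α.ρ.blocksFun i, decide (i ∈ α.I))

theorem SigmaNQ.map_markedPart (α : SigmaNQ q n) :
    Finset.univ.val.map α.markedPart =
      α.typeSigma.map (fun d => (d, true)) + α.typeTau.map (fun d => (d, false)) := by
  rw [← Finset.union_compl α.I, ← Finset.disjUnion_eq_union _ _ disjoint_compl_right,
    Finset.disjUnion_val, Multiset.map_add, SigmaNQ.typeSigma, SigmaNQ.typeTau,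
    Multiset.map_map, Multiset.map_map]
  congr 1 <;> exact Multiset.map_congr rfl fun i hi => by simpa [markedPart] using hi

theorem SigmaNQ.perm_ofFn_markedPart {α β : SigmaNQ q n} (hσ : α.typeSigma = β.typeSigma)
    (hτ : α.typeTau = β.typeTau) : (List.ofFn α.markedPart).Perm (List.ofFn β.markedPart) := by
  rw [← Multiset.coe_eq_coe, ← Fin.univ_val_map, ← Fin.univ_val_map, α.map_markedPart,
    β.map_markedPart, hσ, hτ]

variable (α) in
/-- The `f`-invariant chains of subspaces with the dimensions of `α` on whose basis-carrying
quotients `f` acts trivially. -/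
abbrev InvariantChain (f : End F (Fin n → F)) : Type :=
  Walk (fun i => FlagStep f (α.markedPart i)) ⊥ ⊤

theorem mapsAlphaFlag_self_iff {g : GL (Fin n) F} {A : AlphaFlag F α} : MapsAlphaFlag F g A A ↔
    ∀ i, FlagStep (glMap F g) (α.markedPart i) (A.V i.castSucc) (A.V i.succ) := by
  simp only [MapsAlphaFlag, map_glMap_eq_self_iff]
  refine ⟨fun ⟨hV, hB⟩ i => ?_, fun h => ⟨fun j => ?_, fun i hi m => ?_⟩⟩
  · refine ⟨A.mono i.castSucc_le_succ, hV _, hV _, A.dim i, fun hi => ?_⟩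
    have hi : i ∈ α.I := by simpa [SigmaNQ.markedPart] using hi
    have hle : A.V i.succ ≤ (A.V i.castSucc).comap (glMap F g - LinearMap.id) := by
      refine (le_sup_span_range (A.mono i.castSucc_le_succ) (A.dim i) (A.B_mem i hi)
        (A.B_indep i hi)).trans (sup_le (fun v hv => ?_) (Submodule.span_le.mpr ?_))
      · exact Submodule.sub_mem _ (hV _ hv) hv
      · exact Set.range_subset_iff.mpr (hB i hi)
    exact fun v hv => hle hv
  · cases j using Fin.lastCases with
    | last => exact A.top_eq ▸ End.invtSubmodule.top_mem _
    | cast i => exact (h i).invt_left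
  · exact (h i).sub_mem (by simpa [SigmaNQ.markedPart] using hi) _ (A.B_mem i hi m)

/-- The `α`-flag given by an invariant chain together with frames of its basis-carrying
quotients. -/
noncomputable def AlphaFlag.ofFrames {f : End F (Fin n → F)} (w : InvariantChain α f)
    (s : ∀ i : α.I, Frame (w.1 i.1.castSucc) (w.1 i.1.succ) (α.ρ.blocksFun i)) :
    AlphaFlag F α where
  V := w.1
  mono := Fin.monotone_iff_le_succ.mpr fun i => (w.2.2.2 i).le
  bot_eq := w.2.1
  top_eq := w.2.2.1
  dim i := (w.2.2.2 i).finrank_eq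
  B i hi := (s ⟨i, hi⟩).lift
  B_mem i hi := (s ⟨i, hi⟩).lift_mem
  B_indep i hi := (s ⟨i, hi⟩).linearIndependent_mkQ_lift

theorem mapsAlphaFlag_one_iff {A C : AlphaFlag F α} : MapsAlphaFlag F 1 A C ↔
    A.V = C.V ∧ ∀ i hi m, A.B i hi m - C.B i hi m ∈ C.V i.castSucc := by
  simp [MapsAlphaFlag, glMap_one, funext_iff]

/-- The frames are arbitrary because a fixed flag forces `g` to act trivially on every
basis-carrying quotient. -/
theorem FlagClass.bijective_mk_ofFrames (g : GL (Fin n) F) :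
    Function.Bijective fun (x : Σ w : InvariantChain α (glMap F g),
        ∀ i : α.I, Frame (w.1 i.1.castSucc) (w.1 i.1.succ) (α.ρ.blocksFun i)) =>
      (⟨FlagClass.mk (AlphaFlag.ofFrames x.1 x.2),
        FlagClass.smul_mk_eq_mk_iff.mpr (mapsAlphaFlag_self_iff.mpr x.1.2.2.2)⟩ :
        MulAction.fixedBy (FlagClass F α) g) := by
  constructor
  · rintro ⟨w, s⟩ ⟨w', s'⟩ h
    obtain ⟨hw, hs⟩ := mapsAlphaFlag_one_iff.mp (FlagClass.mk_eq_mk_iff.mp (congrArg Subtype.val h))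
    obtain rfl : w = w' := Subtype.ext hw
    refine congrArg (Sigma.mk w) (funext fun i => Subtype.ext (funext fun m => Subtype.ext ?_))
    rw [← (s i).mkQ_lift, ← (s' i).mkQ_lift, ← sub_eq_zero, ← map_sub]
    exact (Submodule.Quotient.mk_eq_zero _).mpr (hs i.1 i.2 m)
  · rintro ⟨x, hx⟩
    obtain ⟨A, rfl⟩ := FlagClass.mk_surjective x
    have hA := mapsAlphaFlag_self_iff.mp (FlagClass.smul_mk_eq_mk_iff.mp hx)
    let w : InvariantChain α (glMap F g) := ⟨A.V, A.bot_eq, A.top_eq, hA⟩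
    let s (i : α.I) : Frame (w.1 i.1.castSucc) (w.1 i.1.succ) (α.ρ.blocksFun i) :=
      Frame.ofVectors (A.B i.1 i.2) (A.B_mem i.1 i.2) (A.B_indep i.1 i.2)
    refine ⟨⟨w, s⟩, Subtype.ext (FlagClass.mk_eq_mk_iff.mpr (mapsAlphaFlag_one_iff.mpr
      ⟨rfl, fun i hi m => ?_⟩))⟩
    rw [← Submodule.Quotient.mk_eq_zero, Submodule.Quotient.mk_sub, sub_eq_zero]
    exact (s ⟨i, hi⟩).mkQ_lift m

theorem FlagClass.card_fixedBy [Fintype F] (g : GL (Fin n) F) :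
    Nat.card (MulAction.fixedBy (FlagClass F α) g) = Nat.card (InvariantChain α (glMap F g)) *
      (α.typeSigma.map fun d =>
        ∏ i : Fin d, (Fintype.card F ^ d - Fintype.card F ^ (i : ℕ))).prod := by
  classical
  have := Fintype.ofFinite (InvariantChain α (glMap F g))
  have hframes (w : InvariantChain α (glMap F g)) :
      Nat.card (∀ i : α.I, Frame (w.1 i.1.castSucc) (w.1 i.1.succ) (α.ρ.blocksFun i)) =
      (α.typeSigma.map fun d =>
        ∏ i : Fin d, (Fintype.card F ^ d - Fintype.card F ^ (i : ℕ))).prod := by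
    rw [Nat.card_pi, SigmaNQ.typeSigma, Multiset.map_map]
    have hcard (i : α.I) := Frame.card (d := α.ρ.blocksFun i) (w.2.2.2 i).le (w.2.2.2 i).finrank_eq
    rw [Finset.prod_congr rfl fun i _ => hcard i]
    exact Finset.prod_coe_sort α.I fun i => ∏ m : Fin (α.ρ.blocksFun i),
      (Fintype.card F ^ α.ρ.blocksFun i - Fintype.card F ^ (m : ℕ))
  rw [← Nat.card_eq_of_bijective _ (FlagClass.bijective_mk_ofFrames g), Nat.card_sigma,
    Finset.sum_congr rfl fun w _ => hframes w, Finset.sum_const, Finset.card_univ, smul_eq_mul,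
    Nat.card_eq_fintype_card]

theorem FlagClass.card_fixedBy_eq_of_type_eq [Finite F] {β : SigmaNQ q n}
    (hσ : α.typeSigma = β.typeSigma) (hτ : α.typeTau = β.typeTau) (g : GL (Fin n) F) :
    Nat.card (MulAction.fixedBy (FlagClass F α) g) =
      Nat.card (MulAction.fixedBy (FlagClass F β) g) := by
  have := Fintype.ofFinite F
  rw [FlagClass.card_fixedBy, FlagClass.card_fixedBy, hσ]
  congr 1
  exact card_walk_eq_of_perm (ncard_refinements_comm (glMap F g))
    (SigmaNQ.perm_ofFn_markedPart hσ hτ) ⊥ ⊤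

end FlagClasses

section TransitiveSubsets

variable {G Ω Ω' : Type*} [Group G] [MulAction G Ω] [MulAction G Ω'] {Y : Set G} {r : ℕ}

variable (Ω) in
/-- The subset `Y` of `G` is transitive on `Ω` with constant `r`; sharp transitivity is `r = 1`. -/
def IsTransitiveSubset (Y : Set G) (r : ℕ) : Prop :=
  ∀ a b : Ω, Nat.card {g : G // g ∈ Y ∧ g • a = b} = r

variable (Ω) in
/-- The subset `Y` of `G` is a clique for the action on `Ω`: quotients of distinct elements act
without fixed points. -/
def IsCliqueSubset (Y : Set G) : Prop :=
  ∀ x ∈ Y, ∀ y ∈ Y, x ≠ y → ∀ a : Ω, (x⁻¹ * y) • a ≠ a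

theorem isCliqueSubset_iff_injOn :
    IsCliqueSubset Ω Y ↔ ∀ a : Ω, Set.InjOn (fun g : G => g • a) Y := by
  have hfix (x y : G) (a : Ω) : (x⁻¹ * y) • a = a ↔ x • a = y • a := by
    rw [mul_smul, inv_smul_eq_iff, eq_comm]
  simp only [IsCliqueSubset, Set.InjOn, ne_eq, hfix]
  exact ⟨fun h a x hx y hy hxy => not_imp_not.mp (h x hx y hy · a) hxy,
    fun h x hx y hy hne a hxy => hne (h a hx hy hxy)⟩

theorem forall_smul_ne_iff [Finite Ω] (g : G) :
    (∀ a : Ω, g • a ≠ a) ↔ Nat.card (MulAction.fixedBy Ω g) = 0 := by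
  rw [Finite.card_eq_zero_iff, Set.isEmpty_coe_sort, Set.eq_empty_iff_forall_notMem]
  rfl

theorem isCliqueSubset_congr [Finite Ω] [Finite Ω']
    (hfix : ∀ g : G, Nat.card (MulAction.fixedBy Ω g) = Nat.card (MulAction.fixedBy Ω' g)) :
    IsCliqueSubset Ω Y ↔ IsCliqueSubset Ω' Y := by
  simp only [IsCliqueSubset, forall_smul_ne_iff, hfix]

theorem card_eq_of_card_fixedBy_eq
    (hfix : ∀ g : G, Nat.card (MulAction.fixedBy Ω g) = Nat.card (MulAction.fixedBy Ω' g)) :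
    Nat.card Ω = Nat.card Ω' := by
  simpa only [MulAction.fixedBy_one_eq_univ, Nat.card_univ] using hfix 1

theorem IsCliqueSubset.isTransitiveSubset_one [Finite Ω] (h : IsCliqueSubset Ω Y)
    (hcard : Nat.card Y = Nat.card Ω) : IsTransitiveSubset Ω Y 1 := by
  intro a b
  have hinj : Function.Injective fun g : Y => g.1 • a :=
    (isCliqueSubset_iff_injOn.mp h a).injective
  obtain ⟨g, hg⟩ := (hinj.bijective_of_nat_card_le hcard.ge).surjective b
  refine Nat.card_eq_one_iff_exists.mpr ⟨⟨g, g.2, hg⟩, fun x => Subtype.ext ?_⟩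
  exact isCliqueSubset_iff_injOn.mp h a x.2.1 g.2 (x.2.2.trans hg.symm)

namespace IsTransitiveSubset

variable [Finite G]

theorem isCliqueSubset_iff [Nonempty Ω] (h : IsTransitiveSubset Ω Y r) :
    IsCliqueSubset Ω Y ↔ r ≤ 1 := by
  rw [isCliqueSubset_iff_injOn]
  constructor
  · obtain ⟨a⟩ := ‹Nonempty Ω›
    refine fun hinj => h a a ▸ Finite.card_le_one_iff_subsingleton.mpr ⟨fun x y => ?_⟩
    exact Subtype.ext (hinj a x.2.1 y.2.1 (x.2.2.trans y.2.2.symm))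
  · intro hr a x hx y hy hxy
    have := Finite.card_le_one_iff_subsingleton.mp ((h a (y • a)).trans_le hr)
    exact congrArg Subtype.val (Subsingleton.elim
      (⟨x, hx, hxy⟩ : {g : G // g ∈ Y ∧ g • a = y • a}) ⟨y, hy, rfl⟩)

theorem pos [Nonempty Ω] (h : IsTransitiveSubset Ω Y r) (hY : Y.Nonempty) : 0 < r := by
  obtain ⟨a⟩ := ‹Nonempty Ω›
  obtain ⟨g, hg⟩ := hY
  rw [← h a (g • a), Finite.card_pos_iff]
  exact ⟨⟨g, hg, rfl⟩⟩

theorem card_eq [Finite Ω] [Nonempty Ω] (h : IsTransitiveSubset Ω Y r) :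
    Nat.card Y = Nat.card Ω * r := by
  obtain ⟨a⟩ := ‹Nonempty Ω›
  have := Fintype.ofFinite Ω
  have hfiber (b : Ω) : Nat.card {g : Y // g.1 • a = b} = r := by
    rw [← h a b]
    exact Nat.card_congr (Equiv.subtypeSubtypeEquivSubtypeInter (· ∈ Y) (· • a = b))
  rw [← Nat.card_congr (Equiv.sigmaFiberEquiv fun g : Y => g.1 • a), Nat.card_sigma,
    Finset.sum_congr rfl fun b _ => hfiber b, Finset.sum_const, Finset.card_univ, smul_eq_mul,
    Nat.card_eq_fintype_card]

end IsTransitiveSubset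

theorem card_mul_card_stabilizer [MulAction.IsPretransitive G Ω] (a : Ω) :
    Nat.card Ω * Nat.card (MulAction.stabilizer G a) = Nat.card G := by
  rw [← MulAction.index_stabilizer_of_transitive G a, mul_comm, Subgroup.card_mul_index]

theorem IsTransitiveSubset.card_bound [Finite G] [Finite Ω] [Finite Ω']
    [MulAction.IsPretransitive G Ω]
    (hfix : ∀ g : G, Nat.card (MulAction.fixedBy Ω g) = Nat.card (MulAction.fixedBy Ω' g))
    (h : IsTransitiveSubset Ω' Y r) (hY : Y.Nonempty) (a : Ω) :
    Nat.card G ≤ Nat.card Y * Nat.card (MulAction.stabilizer G a) ∧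
    (Nat.card Y * Nat.card (MulAction.stabilizer G a) = Nat.card G ↔ IsCliqueSubset Ω Y) ∧
    (Nat.card Y * Nat.card (MulAction.stabilizer G a) = Nat.card G →
      IsTransitiveSubset Ω Y 1) := by
  have hΩ := card_eq_of_card_fixedBy_eq hfix
  have : Nonempty Ω' := Finite.card_pos_iff.mp (hΩ ▸ Finite.card_pos_iff.mpr ⟨a⟩)
  have hr : 0 < r := h.pos hY
  have hcard : Nat.card Y * Nat.card (MulAction.stabilizer G a) = Nat.card G * r := by
    rw [h.card_eq, ← hΩ, mul_right_comm, card_mul_card_stabilizer]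
  have heq : Nat.card G * r = Nat.card G ↔ r = 1 := Nat.mul_eq_left Nat.card_pos.ne'
  have hclique : r = 1 ↔ IsCliqueSubset Ω Y := by
    rw [isCliqueSubset_congr hfix, h.isCliqueSubset_iff]
    omega
  rw [hcard, heq]
  refine ⟨Nat.le_mul_of_pos_right _ hr, hclique, fun hr1 => ?_⟩
  exact (hclique.mp hr1).isTransitiveSubset_one (by rw [h.card_eq, hr1, mul_one, hΩ])

end TransitiveSubsets

section FlagActions

variable {F : Type} [Field F] {q n : ℕ} {α : SigmaNQ q n} {Y : Set (GL (Fin n) F)}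

theorem FlagClass.isTransitiveSubset_iff {r : ℕ} : IsTransitiveSubset (FlagClass F α) Y r ↔
    ∀ A C : AlphaFlag F α, Nat.card {g : GL (Fin n) F // g ∈ Y ∧ MapsAlphaFlag F g A C} = r := by
  simp only [IsTransitiveSubset, FlagClass.mk_surjective.forall, FlagClass.smul_mk_eq_mk_iff]

theorem FlagClass.isCliqueSubset_iff : IsCliqueSubset (FlagClass F α) Y ↔
    ∀ x ∈ Y, ∀ y ∈ Y, x ≠ y → ∀ A : AlphaFlag F α, ¬ MapsAlphaFlag F (x⁻¹ * y) A A := by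
  simp only [IsCliqueSubset, FlagClass.mk_surjective.forall, ne_eq, FlagClass.smul_mk_eq_mk_iff]

theorem FlagClass.card_stabilizer_mk (A : AlphaFlag F α) :
    Nat.card (MulAction.stabilizer (GL (Fin n) F) (FlagClass.mk A)) =
      Nat.card {g : GL (Fin n) F // MapsAlphaFlag F g A A} :=
  Nat.card_congr (Equiv.subtypeEquivRight fun _ => FlagClass.smul_mk_eq_mk_iff)

theorem stClique_iff_isCliqueSubset [Fintype F] :
    STClique F q n Y α.typeSigma α.typeTau ↔ IsCliqueSubset (FlagClass F α) Y := by
  refine ⟨fun h => FlagClass.isCliqueSubset_iff.mpr fun x hx y hy hxy => h x hx y hy hxy α rfl rfl,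
    fun h x hx y hy hxy β hσ hτ => ?_⟩
  rw [isCliqueSubset_congr (FlagClass.card_fixedBy_eq_of_type_eq hσ.symm hτ.symm)] at h
  exact FlagClass.isCliqueSubset_iff.mp h x hx y hy hxy

end FlagActions

/-- If `Y ⊆ GL(n,q)` is nonempty and `(σ,τ)`-transitive and `H` is the stabiliser of a fixed
`α`-flag of type `(σ,τ)`, then `|Y| ≥ |GL(n,q)|/|H|` (stated multiplicatively as
`|Y|·|H| ≥ |GL(n,q)|`), with equality iff `Y` is a `(σ,τ)`-clique; in the case of equality
`Y` is sharply transitive on `α`-flags. -/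
theorem statement4 (q : ℕ) (hq : IsPrimePow q) (F : Type) [Field F] [Fintype F]
    (hF : Fintype.card F = q) (n : ℕ) (hn : 0 < n)
    (σ τ : Multiset ℕ) (hθ : InTheta q n σ τ)
    (α : SigmaNQ q n) (hα1 : α.typeSigma = σ) (hα2 : α.typeTau = τ)
    (A₀ : AlphaFlag F α)
    (Y : Set (GL (Fin n) F)) (hYne : Y.Nonempty) (hY : STTransitive F q n Y σ τ) :
    Nat.card (GL (Fin n) F)
        ≤ Nat.card Y * Nat.card {g : GL (Fin n) F // MapsAlphaFlag F g A₀ A₀} ∧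
    (Nat.card Y * Nat.card {g : GL (Fin n) F // MapsAlphaFlag F g A₀ A₀}
        = Nat.card (GL (Fin n) F) ↔ STClique F q n Y σ τ) ∧
    (Nat.card Y * Nat.card {g : GL (Fin n) F // MapsAlphaFlag F g A₀ A₀}
        = Nat.card (GL (Fin n) F) →
      ∀ A C : AlphaFlag F α,
        Nat.card {g : GL (Fin n) F // g ∈ Y ∧ MapsAlphaFlag F g A C} = 1) := by
  obtain ⟨β, hβσ, hβτ, r, hr⟩ := hY
  have hfix := FlagClass.card_fixedBy_eq_of_type_eq (F := F) (hα1.trans hβσ.symm)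
    (hα2.trans hβτ.symm)
  obtain ⟨hbound, hclique, hsharp⟩ :=
    (FlagClass.isTransitiveSubset_iff.mpr hr).card_bound hfix hYne (FlagClass.mk A₀)
  rw [FlagClass.card_stabilizer_mk] at hbound hclique hsharp
  rw [← stClique_iff_isCliqueSubset, hα1, hα2] at hclique
  exact ⟨hbound, hclique, fun h => FlagClass.isTransitiveSubset_iff.mp (hsharp h)⟩
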